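/- Let n ≥ 1, let 0 < ε < 1, 0 < α < 1 − ε and T > 1 + α − ε. Every classical solution u of the wave equation on [0,T]×closure(Ω), where Ω is the open unit ball of ℝⁿ, with Dirichlet boundary conditions, whose initial data are supported in the closed ball of radius α and which satisfies ∂ₜu(t,x) = 0 for all t ∈ (0,T) and all x with 1 − ε < |x| < 1, vanishes identically on [0,T]×closure(Ω). -/

import Mathlib

open MeasureTheory

/-- Partial derivative in time of a function of (time, space). -/
noncomputable def pdt {n : ℕ} (u : ℝ → EuclideanSpace ℝ (Fin n) → ℝ) :
    ℝ → EuclideanSpace ℝ (Fin n) → ℝ := fun t x => deriv (fun s => u s x) t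

/-- The Euclidean Laplacian of `f` at `x`, as the sum of the second derivatives
along the coordinate directions. -/
noncomputable def lap {n : ℕ} (f : EuclideanSpace ℝ (Fin n) → ℝ)
    (x : EuclideanSpace ℝ (Fin n)) : ℝ :=
  ∑ i, iteratedFDeriv ℝ 2 f x ![EuclideanSpace.single i 1, EuclideanSpace.single i 1]

/-!
A classical solution `u` that is constant in time on the annulus and starts from `0` there extends
by zero to a wave on the whole space, supported in the ball of radius `r = 1 - ε` at all times. By
Green's formula its pairing `∫ (∂ₜu φ - u ∂ₜφ)` with any wave `φ` is conserved; take
`φ(t, x) = p(⟪ξ, x⟫ - c t)` with `|c| = ‖ξ‖`. If `p` vanishes near `[-c T - |c| r, -c T + |c| r]`,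
then `φ` misses the support of `u` at time `T`, so the pairing is zero. The opposite wave
`p(⟪ξ, x⟫ + c t)` has the same position and the opposite velocity at time `0`, which gives the same
for `p` vanishing near `[c T - |c| r, c T + |c| r]` and near `[-|c| α, |c| α]`, the range of
`⟪ξ, x⟫` on the support of `u(0, ·)`. Since `T > r + α`, a smooth cutoff splits every `p` into two
such profiles, so all these pairings are zero. Subtracting the cases `c = ±‖ξ‖` leaves
`∫ u p'(⟪ξ, x⟫) = 0`, and trigonometric `p` show that the Fourier transform of `u(t, ·)` vanishes.
-/

open Set Filter Topology Function Metric Laplacian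
open scoped RealInnerProductSpace ContDiff Manifold

section Balls

lemma disjoint_closedBall_neg_union {F : Type*} [NormedAddCommGroup F] [NormedSpace ℝ F] {a : F}
    {R β : ℝ} (hβ : 0 ≤ β) (h : R + β < ‖a‖) :
    Disjoint (closedBall (-a) R) (closedBall a R ∪ closedBall 0 β) := by
  have hdist : dist (-a) a = ‖a‖ + ‖a‖ := by
    rw [dist_eq_norm, ← neg_add', norm_neg, ← two_smul ℝ a, norm_smul, Real.norm_two, two_mul]
  refine disjoint_union_right.2 ⟨closedBall_disjoint_closedBall ?_,
    closedBall_disjoint_closedBall ?_⟩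
  · linarith
  · rwa [dist_zero_right, norm_neg]

lemma inner_mem_closedBall {E : Type*} [NormedAddCommGroup E] [InnerProductSpace ℝ E] {ξ x : E}
    {c r : ℝ} (hc : c ^ 2 = ‖ξ‖ ^ 2) (hx : x ∈ closedBall 0 r) :
    ⟪ξ, x⟫ ∈ closedBall 0 (|c| * r) := by
  have hcξ : |c| = ‖ξ‖ := by simpa only [abs_norm] using (sq_eq_sq_iff_abs_eq_abs c ‖ξ‖).1 hc
  rw [mem_closedBall_zero_iff] at hx ⊢
  rw [hcξ]
  exact (norm_inner_le_norm ξ x).trans (mul_le_mul_of_nonneg_left hx (norm_nonneg ξ))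

end Balls

section Calculus

lemma eq_of_hasDerivAt_zero {f : ℝ → ℝ} {a b : ℝ} (hf : ContinuousOn f (Icc a b))
    (hf' : ∀ t ∈ Ioo a b, HasDerivAt f 0 t) {t : ℝ} (ht : t ∈ Icc a b) : f t = f a := by
  obtain rfl | hat := ht.1.eq_or_lt
  · rfl
  obtain ⟨c, -, hc⟩ := exists_hasDerivAt_eq_slope f 0 hat
    (hf.mono (Icc_subset_Icc_right ht.2)) fun τ hτ => hf' τ ⟨hτ.1, hτ.2.trans_le ht.2⟩
  have hslope : (f t - f a) / (t - a) = 0 := hc.symm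
  exact sub_eq_zero.1 ((div_eq_zero_iff.1 hslope).resolve_right (sub_pos.2 hat).ne')

lemma eq_of_deriv_eq_zero {f : ℝ → ℝ} {a b : ℝ} (hf : DifferentiableOn ℝ f (Icc a b))
    (hf' : ∀ t ∈ Ioo a b, deriv f t = 0) {t : ℝ} (ht : t ∈ Icc a b) : f t = f a := by
  refine eq_of_hasDerivAt_zero hf.continuousOn (fun τ hτ => ?_) ht
  rw [← hf' τ hτ]
  exact (hf.differentiableAt (Icc_mem_nhds hτ.1 hτ.2)).hasDerivAt

lemma contDiffOn_indicator_of_eq_zero {X F : Type*} [NormedAddCommGroup X] [NormedSpace ℝ X]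
    [NormedAddCommGroup F] [NormedSpace ℝ F] {k : WithTop ℕ∞} {f : X → F} {S W K : Set X}
    (hW : IsOpen W) (hK : IsClosed K) (hKW : K ⊆ W) (hf : ContDiffOn ℝ k f (S ∩ W))
    (h0 : ∀ x ∈ S ∩ (W \ K), f x = 0) : ContDiffOn ℝ k (W.indicator f) S := by
  intro x hx
  by_cases hxW : x ∈ W
  · have hf_near : W.indicator f =ᶠ[𝓝 x] f :=
      eventuallyEq_of_mem (hW.mem_nhds hxW) (eqOn_indicator)
    have hfx : ContDiffWithinAt ℝ k f S x :=
      (contDiffWithinAt_inter (hW.mem_nhds hxW)).1 (hf x ⟨hx, hxW⟩)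
    exact hfx.congr_of_eventuallyEq_of_mem (hf_near.filter_mono nhdsWithin_le_nhds) hx
  · have h_near : W.indicator f =ᶠ[𝓝[S] x] fun _ => 0 := by
      have hK_nhds : Kᶜ ∈ 𝓝 x := hK.isOpen_compl.mem_nhds fun hxK => hxW (hKW hxK)
      filter_upwards [self_mem_nhdsWithin, mem_nhdsWithin_of_mem_nhds hK_nhds] with y hyS hyK
      by_cases hyW : y ∈ W
      · rw [indicator_of_mem hyW, h0 y ⟨hyS, hyW, hyK⟩]
      · exact indicator_of_notMem hyW f
    exact contDiffWithinAt_const.congr_of_eventuallyEq_of_mem h_near hx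

lemma hasDerivWithinAt_of_differentiableWithinAt_uncurry {E F : Type*} [NormedAddCommGroup E]
    [NormedSpace ℝ E] [NormedAddCommGroup F] [NormedSpace ℝ F] {g : ℝ → E → F} {I : Set ℝ}
    {s : Set E} {t : ℝ} {x : E}
    (hg : DifferentiableWithinAt ℝ (uncurry g) (I ×ˢ s) (t, x)) (hx : x ∈ s) :
    HasDerivWithinAt (fun τ => g τ x) (fderivWithin ℝ (uncurry g) (I ×ˢ s) (t, x) (1, 0)) I t := by
  have hmaps : MapsTo (fun τ => (τ, x)) I (I ×ˢ s) := fun _ hτ => ⟨hτ, hx⟩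
  exact hg.hasFDerivWithinAt.comp_hasDerivWithinAt t
    ((hasDerivWithinAt_id t I).prodMk (hasDerivWithinAt_const t I x)) hmaps

lemma differentiableOn_of_differentiableOn_uncurry {E F : Type*} [NormedAddCommGroup E]
    [NormedSpace ℝ E] [NormedAddCommGroup F] [NormedSpace ℝ F] {g : ℝ → E → F} {I : Set ℝ}
    {s : Set E} (hg : DifferentiableOn ℝ (uncurry g) (I ×ˢ s)) {x : E} (hx : x ∈ s) :
    DifferentiableOn ℝ (fun τ => g τ x) I := fun t ht =>
  (hasDerivWithinAt_of_differentiableWithinAt_uncurry (hg (t, x) ⟨ht, hx⟩)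
    hx).differentiableWithinAt

lemma contDiffOn_uncurry_derivWithin {E F : Type*} [NormedAddCommGroup E] [NormedSpace ℝ E]
    [NormedAddCommGroup F] [NormedSpace ℝ F] {k : WithTop ℕ∞} {g : ℝ → E → F} {I : Set ℝ}
    {s : Set E} (hI : UniqueDiffOn ℝ I) (hs : UniqueDiffOn ℝ s)
    (hg : ContDiffOn ℝ (k + 1) (uncurry g) (I ×ˢ s)) :
    ContDiffOn ℝ k (uncurry fun t x => derivWithin (fun τ => g τ x) I t) (I ×ˢ s) := by
  refine ((hg.fderivWithin (hI.prod hs) le_rfl).clm_apply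
    (contDiffOn_const (c := ((1 : ℝ), (0 : E))))).congr fun z hz => ?_
  exact (hasDerivWithinAt_of_differentiableWithinAt_uncurry
    (hg.differentiableOn (by simp) z hz) hz.2).derivWithin (hI z.1 hz.1)

lemma exists_contDiff_add_eq_of_disjoint {E F : Type*} [NormedAddCommGroup E] [NormedSpace ℝ E]
    [FiniteDimensional ℝ E] [NormedAddCommGroup F] [NormedSpace ℝ F] {k : ℕ∞} {p : E → F}
    (hp : ContDiff ℝ k p) {A B : Set E} (hA : IsClosed A) (hB : IsClosed B) (hAB : Disjoint A B) :
    ∃ q r : E → F, ContDiff ℝ k q ∧ ContDiff ℝ k r ∧ q + r = p ∧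
      (∀ x ∈ A, q =ᶠ[𝓝 x] 0) ∧ ∀ x ∈ B, r =ᶠ[𝓝 x] 0 := by
  obtain ⟨χ, hχA, hχB, -⟩ :=
    exists_contMDiffMap_zero_one_nhds_of_isClosed 𝓘(ℝ, E) (n := k) hA hB hAB
  have hχ : ContDiff ℝ k χ := χ.contMDiff.contDiff
  refine ⟨fun x => χ x • p x, fun x => (1 - χ x) • p x, hχ.smul hp,
    (contDiff_const.sub hχ).smul hp, ?_, fun x hx => ?_, fun x hx => ?_⟩
  · funext x
    simp [sub_smul]
  · filter_upwards [eventually_nhdsSet_iff_forall.1 hχA x hx] with y hy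
    simp [hy]
  · filter_upwards [eventually_nhdsSet_iff_forall.1 hχB x hx] with y hy
    simp [hy]

lemma contDiff_fderiv_apply {E F : Type*} [NormedAddCommGroup E] [NormedSpace ℝ E]
    [NormedAddCommGroup F] [NormedSpace ℝ F] {f : E → F} {k : WithTop ℕ∞}
    (hf : ContDiff ℝ (k + 1) f) (v : E) :
    ContDiff ℝ k fun x => fderiv ℝ f x v :=
  (hf.fderiv_right le_rfl).clm_apply contDiff_const

lemma laplacian_eq_sum_fderiv_fderiv {ι E F : Type*} [Fintype ι] [NormedAddCommGroup E]
    [InnerProductSpace ℝ E] [FiniteDimensional ℝ E] [NormedAddCommGroup F] [NormedSpace ℝ F]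
    {f : E → F} (hf : ContDiff ℝ 2 f) (b : OrthonormalBasis ι ℝ E) (x : E) :
    Δ f x = ∑ i, fderiv ℝ (fun y => fderiv ℝ f y (b i)) x (b i) := by
  have hf' : DifferentiableAt ℝ (fderiv ℝ f) x :=
    (hf.fderiv_right (m := 1) le_rfl).differentiable one_ne_zero x
  rw [InnerProductSpace.laplacian_eq_iteratedFDeriv_orthonormalBasis f b]
  refine Finset.sum_congr rfl fun i _ => ?_
  rw [iteratedFDeriv_two_apply, fderiv_clm_apply hf' (differentiableAt_const _)]
  simp

lemma laplacian_comp_inner {E : Type*} [NormedAddCommGroup E] [InnerProductSpace ℝ E]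
    [FiniteDimensional ℝ E] {p : ℝ → ℝ} (hp : ContDiff ℝ 2 p) (ξ x : E) :
    Δ (fun y => p ⟪ξ, y⟫) x = ‖ξ‖ ^ 2 * deriv (deriv p) ⟪ξ, x⟫ := by
  have hfderiv {q : ℝ → ℝ} (hq : Differentiable ℝ q) (y v : E) :
      fderiv ℝ (fun z => q ⟪ξ, z⟫) y v = deriv q ⟪ξ, y⟫ * ⟪ξ, v⟫ := by
    have h := ((hq ⟪ξ, y⟫).hasDerivAt.comp_hasFDerivAt y (innerSL ℝ ξ).hasFDerivAt).fderiv
    exact DFunLike.congr_fun h v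
  have hp' : Differentiable ℝ (deriv p) := hp.differentiable_deriv_two
  have hp'' : Differentiable ℝ fun y => deriv p ⟪ξ, y⟫ := hp'.comp (innerSL ℝ ξ).differentiable
  let b := stdOrthonormalBasis ℝ E
  have hcomp : ContDiff ℝ 2 fun y => p ⟪ξ, y⟫ := hp.comp (innerSL ℝ ξ).contDiff
  simp only [laplacian_eq_sum_fderiv_fderiv hcomp b, hfderiv (hp.differentiable two_ne_zero)]
  simp only [fderiv_mul_const (hp'' _), smul_apply, hfderiv hp', smul_eq_mul]
  rw [← b.sum_sq_norm_inner_left ξ, Finset.sum_mul]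
  refine Finset.sum_congr rfl fun i _ => ?_
  rw [Real.norm_eq_abs, sq_abs]
  ring

end Calculus

section Integration

variable {E : Type*} [NormedAddCommGroup E] [MeasurableSpace E] [BorelSpace E]

lemma hasDerivAt_integral_of_compact_support {X G : Type*} [TopologicalSpace X]
    [SecondCountableTopology X] [T2Space X] [MeasurableSpace X] [OpensMeasurableSpace X]
    {μ : Measure X} [IsFiniteMeasureOnCompacts μ] [NormedAddCommGroup G] [NormedSpace ℝ G]
    {f f' : ℝ → X → G} {s : Set ℝ} {K : Set X} (hs : IsOpen s) (hK : IsCompact K)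
    (hf : ContinuousOn (uncurry f) (s ×ˢ univ)) (hf' : ContinuousOn (uncurry f') (s ×ˢ univ))
    (hfK : ∀ t ∈ s, ∀ x ∉ K, f t x = 0) (hfK' : ∀ t ∈ s, ∀ x ∉ K, f' t x = 0)
    (hderiv : ∀ t ∈ s, ∀ x, HasDerivAt (fun τ => f τ x) (f' t x) t) {t : ℝ} (ht : t ∈ s) :
    HasDerivAt (fun τ => ∫ x, f τ x ∂μ) (∫ x, f' t x ∂μ) t := by
  have hslice {g : ℝ → X → G} (hg : ContinuousOn (uncurry g) (s ×ˢ univ)) {τ : ℝ} (hτ : τ ∈ s) :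
      Continuous (g τ) := continuousOn_univ.1 (hg.uncurry_left τ hτ)
  obtain ⟨L, hL, htL, hLs⟩ := exists_compact_subset hs ht
  obtain ⟨C, hC⟩ := (hL.prod hK).exists_bound_of_continuousOn
    (hf'.mono (prod_mono hLs (subset_univ K)))
  refine (hasDerivAt_integral_of_dominated_loc_of_deriv_le (bound := K.indicator fun _ => C)
    (mem_interior_iff_mem_nhds.1 htL) ?_ ?_ ?_ ?_ ?_ ?_).2
  · filter_upwards [hs.mem_nhds ht] with τ hτ
    exact (hslice hf hτ).aestronglyMeasurable
  · exact (hslice hf ht).integrable_of_hasCompactSupport (.intro hK (hfK t ht))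
  · exact (hslice hf' ht).aestronglyMeasurable
  · refine .of_forall fun x τ hτ => ?_
    by_cases hx : x ∈ K
    · rw [indicator_of_mem hx]
      exact hC (τ, x) ⟨hτ, hx⟩
    · simp only [indicator_of_notMem hx, hfK' τ (hLs hτ) x hx, norm_zero, le_refl]
  · exact (integrable_indicator_iff hK.measurableSet).2 (integrableOn_const hK.measure_ne_top)
  · exact .of_forall fun x τ hτ => hderiv τ (hLs hτ) x

lemma integral_fderiv_mul_eq_neg [NormedSpace ℝ E] [FiniteDimensional ℝ E] {μ : Measure E}
    [μ.IsAddHaarMeasure] {f g : E → ℝ} (hf : ContDiff ℝ 1 f) (hg : ContDiff ℝ 1 g)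
    (hfc : HasCompactSupport f) (v : E) :
    ∫ x, fderiv ℝ f x v * g x ∂μ = -∫ x, f x * fderiv ℝ g x v ∂μ := by
  have hf' : Continuous fun x => fderiv ℝ f x v :=
    (hf.continuous_fderiv one_ne_zero).clm_apply continuous_const
  have hg' : Continuous fun x => fderiv ℝ g x v :=
    (hg.continuous_fderiv one_ne_zero).clm_apply continuous_const
  rw [integral_mul_fderiv_eq_neg_fderiv_mul_of_integrable, neg_neg]
  · exact (hf'.mul hg.continuous).integrable_of_hasCompactSupport (hfc.fderiv_apply ℝ v).mul_right
  · exact (hf.continuous.mul hg').integrable_of_hasCompactSupport hfc.mul_right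
  · exact (hf.continuous.mul hg.continuous).integrable_of_hasCompactSupport hfc.mul_right
  · exact fun x _ => hf.differentiable one_ne_zero x
  · exact fun x _ => hg.differentiable one_ne_zero x

variable [InnerProductSpace ℝ E] [FiniteDimensional ℝ E]

lemma integral_laplacian_mul_eq {f g : E → ℝ} (hf : ContDiff ℝ 2 f) (hg : ContDiff ℝ 2 g)
    (hfc : HasCompactSupport f) : ∫ x, Δ f x * g x = ∫ x, f x * Δ g x := by
  let b := stdOrthonormalBasis ℝ E
  have hint {φ ψ : E → ℝ} (hφ : ContDiff ℝ 0 φ) (hψ : ContDiff ℝ 0 ψ)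
      (hφc : HasCompactSupport φ) : Integrable fun x => φ x * ψ x :=
    (hφ.continuous.mul hψ.continuous).integrable_of_hasCompactSupport hφc.mul_right
  have hf' i : ContDiff ℝ 1 fun x => fderiv ℝ f x (b i) := contDiff_fderiv_apply hf _
  have hg' i : ContDiff ℝ 1 fun x => fderiv ℝ g x (b i) := contDiff_fderiv_apply hg _
  simp only [laplacian_eq_sum_fderiv_fderiv hf b, laplacian_eq_sum_fderiv_fderiv hg b,
    Finset.sum_mul, Finset.mul_sum]
  rw [integral_finsetSum _ fun i _ => ?_, integral_finsetSum _ fun i _ => ?_]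
  · refine Finset.sum_congr rfl fun i _ => ?_
    have hfc' : HasCompactSupport fun x => fderiv ℝ f x (b i) := hfc.fderiv_apply ℝ (b i)
    rw [integral_fderiv_mul_eq_neg (hf' i) (hg.of_le one_le_two) hfc',
      integral_fderiv_mul_eq_neg (hf.of_le one_le_two) (hg' i) hfc, neg_neg]
  · exact hint (hf.of_le zero_le_two) (contDiff_fderiv_apply (hg' i) _) hfc
  · exact hint (contDiff_fderiv_apply (hf' i) _) (hg.of_le zero_le_two)
      ((hfc.fderiv_apply ℝ (b i)).fderiv_apply ℝ (b i))

lemma fourier_ofReal_eq {f : E → ℝ} (hf : Integrable f) (ξ : E) :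
    FourierTransform.fourier (fun x => (f x : ℂ)) ξ =
      (∫ x, f x * Real.cos ⟪(2 * Real.pi) • ξ, x⟫ : ℝ) -
        (∫ x, f x * Real.sin ⟪(2 * Real.pi) • ξ, x⟫ : ℝ) * Complex.I := by
  have hcos : Integrable fun x => f x * Real.cos ⟪(2 * Real.pi) • ξ, x⟫ :=
    hf.mul_bdd (c := 1) (by fun_prop) (.of_forall fun x => Real.abs_cos_le_one _)
  have hsin : Integrable fun x => f x * Real.sin ⟪(2 * Real.pi) • ξ, x⟫ :=
    hf.mul_bdd (c := 1) (by fun_prop) (.of_forall fun x => Real.abs_sin_le_one _)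
  rw [Real.fourier_eq', ← integral_complex_ofReal, ← integral_complex_ofReal,
    ← integral_mul_const, ← integral_sub hcos.ofReal (hsin.ofReal.mul_const _)]
  congr 1 with x
  have hphase : -2 * Real.pi * ⟪x, ξ⟫ = -⟪(2 * Real.pi) • ξ, x⟫ := by
    rw [real_inner_smul_left, real_inner_comm]
    ring
  rw [hphase, Complex.exp_mul_I, ← Complex.ofReal_cos, ← Complex.ofReal_sin, Real.cos_neg,
    Real.sin_neg, smul_eq_mul]
  push_cast
  ring

lemma eq_zero_of_integral_mul_cos_sin_eq_zero [Nontrivial E] {f : E → ℝ} (hf : Continuous f)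
    (hfi : Integrable f) (hcos : ∀ ξ ≠ 0, ∫ x, f x * Real.cos ⟪ξ, x⟫ = 0)
    (hsin : ∀ ξ ≠ 0, ∫ x, f x * Real.sin ⟪ξ, x⟫ = 0) : f = 0 := by
  let g : E → ℂ := fun x => f x
  have hg : Continuous g := Complex.continuous_ofReal.comp hf
  have hne : ∀ᵐ ξ : E, ξ ≠ 0 := by simp [ae_iff]
  have hfourier : FourierTransform.fourier g =ᵐ[volume] 0 := by
    filter_upwards [hne] with ξ hξ
    have h2ξ : (2 * Real.pi) • ξ ≠ 0 := smul_ne_zero Real.two_pi_pos.ne' hξ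
    simp [g, fourier_ofReal_eq hfi, hcos _ h2ξ, hsin _ h2ξ]
  have hinv := hg.fourierInv_fourier_eq hfi.ofReal ((integrable_zero _ _ _).congr hfourier.symm)
  funext x
  have hgx : g x = 0 := by
    rw [← hinv, Real.fourierInv_eq]
    refine integral_eq_zero_of_ae ?_
    filter_upwards [hfourier] with ξ hξ
    simp [hξ]
  exact Complex.ofReal_eq_zero.1 hgx

end Integration

section Waves

variable {E : Type*} [NormedAddCommGroup E] [InnerProductSpace ℝ E] [FiniteDimensional ℝ E]

/-- Classical solutions of the wave equation on `[0, T] × E`. The velocity `v = ∂ₜu` is part of the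
data, so that the Cauchy data at time `t` are `u t` and `v t` also at the end times, where `deriv`
would depend on values of `u` outside `[0, T]`. -/
structure IsWave (T : ℝ) (u v : ℝ → E → ℝ) : Prop where
  contDiffOn : ContDiffOn ℝ 2 (uncurry u) (Icc 0 T ×ˢ univ)
  hasDerivWithinAt : ∀ t ∈ Icc 0 T, ∀ x, HasDerivWithinAt (fun τ => u τ x) (v t x) (Icc 0 T) t
  hasDerivAt_velocity : ∀ t ∈ Ioo 0 T, ∀ x, HasDerivAt (fun τ => v τ x) (Δ (u t) x) t

namespace IsWave

variable {T : ℝ} {u v φ ψ : ℝ → E → ℝ} {K : Set E}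

lemma hasDerivAt (h : IsWave T u v) {t : ℝ} (ht : t ∈ Ioo 0 T) (x : E) :
    HasDerivAt (fun τ => u τ x) (v t x) t :=
  (h.hasDerivWithinAt t (Ioo_subset_Icc_self ht) x).hasDerivAt (Icc_mem_nhds ht.1 ht.2)

lemma contDiff (h : IsWave T u v) {t : ℝ} (ht : t ∈ Icc 0 T) : ContDiff ℝ 2 (u t) := by
  have hmaps : MapsTo (fun x : E => (t, x)) univ (Icc 0 T ×ˢ univ) := fun _ _ => ⟨ht, mem_univ _⟩
  exact contDiffOn_univ.1
    (h.contDiffOn.comp (contDiff_const.prodMk contDiff_id).contDiffOn hmaps)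

lemma contDiffOn_velocity (h : IsWave T u v) (hT : 0 < T) :
    ContDiffOn ℝ 1 (uncurry v) (Icc 0 T ×ˢ univ) := by
  have hu : ContDiffOn ℝ (1 + 1) (uncurry u) (Icc 0 T ×ˢ univ) := by
    simpa only [one_add_one_eq_two] using h.contDiffOn
  refine (contDiffOn_uncurry_derivWithin (uniqueDiffOn_Icc hT) uniqueDiffOn_univ hu).congr ?_
  exact fun z hz => ((h.hasDerivWithinAt z.1 hz.1 z.2).derivWithin
    (uniqueDiffOn_Icc hT z.1 hz.1)).symm

lemma continuous_velocity (h : IsWave T u v) (hT : 0 < T) {t : ℝ} (ht : t ∈ Icc 0 T) :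
    Continuous (v t) :=
  continuousOn_univ.1 ((h.contDiffOn_velocity hT).continuousOn.uncurry_left t ht)

lemma continuousOn_laplacian (h : IsWave T u v) (hT : 0 < T) :
    ContinuousOn (uncurry fun t => Δ (u t)) (Ioo 0 T ×ˢ univ) := by
  have hv : ContDiffOn ℝ (0 + 1) (uncurry v) (Ioo 0 T ×ˢ univ) := by
    simpa only [zero_add] using
      (h.contDiffOn_velocity hT).mono (prod_mono_left Ioo_subset_Icc_self)
  refine (contDiffOn_uncurry_derivWithin isOpen_Ioo.uniqueDiffOn
    uniqueDiffOn_univ hv).continuousOn.congr fun z hz => ?_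
  exact ((h.hasDerivAt_velocity z.1 hz.1 z.2).hasDerivWithinAt.derivWithin
    (isOpen_Ioo.uniqueDiffOn z.1 hz.1)).symm

lemma velocity_eq_zero (h : IsWave T u v) (hT : 0 < T) {x : E}
    (hx : ∀ t ∈ Icc 0 T, u t x = 0) {t : ℝ} (ht : t ∈ Icc 0 T) : v t x = 0 :=
  (uniqueDiffOn_Icc hT t ht).eq_deriv _ (h.hasDerivWithinAt t ht x)
    ((hasDerivWithinAt_const t _ (0 : ℝ)).congr hx (hx t ht))

lemma laplacian_eq_zero (h : IsWave T u v) (hT : 0 < T) {x : E}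
    (hx : ∀ t ∈ Icc 0 T, u t x = 0) {t : ℝ} (ht : t ∈ Ioo 0 T) : Δ (u t) x = 0 := by
  have hv : (fun τ => v τ x) =ᶠ[𝓝 t] fun _ => 0 := by
    filter_upwards [Icc_mem_nhds ht.1 ht.2] with τ hτ
    exact h.velocity_eq_zero hT hx hτ
  exact (h.hasDerivAt_velocity t ht x).unique ((hasDerivAt_const t 0).congr_of_eventuallyEq hv)

section Pairing

variable [MeasurableSpace E] [BorelSpace E]

lemma continuousOn_integral_pairing (h : IsWave T u v) (hφ : IsWave T φ ψ) (hT : 0 < T)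
    (hK : IsCompact K) (huK : ∀ t ∈ Icc 0 T, ∀ x ∉ K, u t x = 0) :
    ContinuousOn (fun t => ∫ x, (v t x * φ t x - u t x * ψ t x)) (Icc 0 T) := by
  refine continuousOn_integral_of_compact_support hK ?_ fun t x ht hx => ?_
  · exact ((h.contDiffOn_velocity hT).continuousOn.mul hφ.contDiffOn.continuousOn).sub
      (h.contDiffOn.continuousOn.mul (hφ.contDiffOn_velocity hT).continuousOn)
  · rw [huK t ht x hx, h.velocity_eq_zero hT (fun τ hτ => huK τ hτ x hx) ht]
    ring

lemma hasDerivAt_integral_pairing (h : IsWave T u v) (hφ : IsWave T φ ψ) (hT : 0 < T)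
    (hK : IsCompact K) (huK : ∀ t ∈ Icc 0 T, ∀ x ∉ K, u t x = 0) {t : ℝ} (ht : t ∈ Ioo 0 T) :
    HasDerivAt (fun τ => ∫ x, (v τ x * φ τ x - u τ x * ψ τ x))
      (∫ x, (Δ (u t) x * φ t x - u t x * Δ (φ t) x)) t := by
  have hsub : Ioo 0 T ×ˢ (univ : Set E) ⊆ Icc 0 T ×ˢ univ := prod_mono_left Ioo_subset_Icc_self
  have hu := h.contDiffOn.continuousOn.mono hsub
  have hv := (h.contDiffOn_velocity hT).continuousOn.mono hsub
  have hφ' := hφ.contDiffOn.continuousOn.mono hsub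
  have hψ := (hφ.contDiffOn_velocity hT).continuousOn.mono hsub
  refine hasDerivAt_integral_of_compact_support
    (f := fun τ x => v τ x * φ τ x - u τ x * ψ τ x)
    (f' := fun τ x => Δ (u τ) x * φ τ x - u τ x * Δ (φ τ) x) isOpen_Ioo hK
    ((hv.mul hφ').sub (hu.mul hψ))
    (((h.continuousOn_laplacian hT).mul hφ').sub (hu.mul (hφ.continuousOn_laplacian hT)))
    (fun τ hτ x hx => ?_) (fun τ hτ x hx => ?_) (fun τ hτ x => ?_) ht
  · rw [huK τ (Ioo_subset_Icc_self hτ) x hx,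
      h.velocity_eq_zero hT (fun σ hσ => huK σ hσ x hx) (Ioo_subset_Icc_self hτ)]
    ring
  · rw [huK τ (Ioo_subset_Icc_self hτ) x hx,
      h.laplacian_eq_zero hT (fun σ hσ => huK σ hσ x hx) hτ]
    ring
  · exact (((h.hasDerivAt_velocity τ hτ x).fun_mul (hφ.hasDerivAt hτ x)).fun_sub
      ((h.hasDerivAt hτ x).fun_mul (hφ.hasDerivAt_velocity τ hτ x))).congr_deriv (by ring)

lemma integral_pairing_eq (h : IsWave T u v) (hφ : IsWave T φ ψ) (hT : 0 < T)
    (hK : IsCompact K) (huK : ∀ t ∈ Icc 0 T, ∀ x ∉ K, u t x = 0) {t : ℝ} (ht : t ∈ Icc 0 T) :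
    ∫ x, (v t x * φ t x - u t x * ψ t x) = ∫ x, (v 0 x * φ 0 x - u 0 x * ψ 0 x) := by
  refine eq_of_hasDerivAt_zero (h.continuousOn_integral_pairing hφ hT hK huK) (fun τ hτ => ?_) ht
  have hτ' : τ ∈ Icc 0 T := Ioo_subset_Icc_self hτ
  have huc : HasCompactSupport (u τ) := .intro hK (huK τ hτ')
  have hΔφ : Continuous (Δ (φ τ)) :=
    continuousOn_univ.1 ((hφ.continuousOn_laplacian hT).uncurry_left τ hτ)
  have hΔu : Continuous (Δ (u τ)) :=
    continuousOn_univ.1 ((h.continuousOn_laplacian hT).uncurry_left τ hτ)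
  have hΔuc : HasCompactSupport (Δ (u τ)) :=
    .intro hK fun x hx => h.laplacian_eq_zero hT (fun σ hσ => huK σ hσ x hx) hτ
  have hgreen : ∫ x, (Δ (u τ) x * φ τ x - u τ x * Δ (φ τ) x) = 0 := by
    rw [integral_sub, integral_laplacian_mul_eq (h.contDiff hτ') (hφ.contDiff hτ') huc, sub_self]
    · exact (hΔu.mul (hφ.contDiff hτ').continuous).integrable_of_hasCompactSupport hΔuc.mul_right
    · exact ((h.contDiff hτ').continuous.mul hΔφ).integrable_of_hasCompactSupport huc.mul_right
  exact hgreen ▸ h.hasDerivAt_integral_pairing hφ hT hK huK hτ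

end Pairing

end IsWave

lemma isWave_plane {p : ℝ → ℝ} (hp : ContDiff ℝ 2 p) {ξ : E} {c : ℝ} (hc : c ^ 2 = ‖ξ‖ ^ 2)
    (T : ℝ) :
    IsWave T (fun t x => p (⟪ξ, x⟫ - c * t)) fun t x => -c * deriv p (⟪ξ, x⟫ - c * t) := by
  have hphase (t : ℝ) (x : E) : HasDerivAt (fun τ => ⟪ξ, x⟫ - c * τ) (-c) t := by
    simpa using ((hasDerivAt_id t).const_mul c).const_sub ⟪ξ, x⟫
  have hp' : Differentiable ℝ (deriv p) := hp.differentiable_deriv_two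
  refine ⟨?_, fun t _ x => ?_, fun t _ x => ?_⟩
  · exact (hp.comp (((innerSL ℝ ξ).contDiff.comp contDiff_snd).sub
      (contDiff_const.mul contDiff_fst))).contDiffOn
  · exact ((hp.differentiable two_ne_zero _).hasDerivAt.comp t
      (hphase t x)).hasDerivWithinAt.congr_deriv (mul_comm _ _)
  · have hshift : ContDiff ℝ 2 fun s => p (s - c * t) := hp.comp (contDiff_id.sub contDiff_const)
    have hp_shift : deriv (fun s => p (s - c * t)) = fun s => deriv p (s - c * t) :=
      funext fun s => deriv_comp_sub_const p (c * t) s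
    rw [laplacian_comp_inner hshift, hp_shift, deriv_comp_sub_const, ← hc]
    exact (((hp' _).hasDerivAt.comp t (hphase t x)).const_mul (-c)).congr_deriv (by ring)

section Moments

variable [MeasurableSpace E] [BorelSpace E]

/-- The pairing at time `0` of the Cauchy data `(f, g)` with the travelling plane wave
`p (⟪ξ, x⟫ - c * t)`, whose Cauchy data are `p ⟪ξ, x⟫` and `-c * p' ⟪ξ, x⟫`. -/
noncomputable def planeMoment (p : ℝ → ℝ) (ξ : E) (c : ℝ) (f g : E → ℝ) : ℝ :=
  ∫ x, (g x * p ⟪ξ, x⟫ + c * (f x * deriv p ⟪ξ, x⟫))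

variable {p q : ℝ → ℝ} {ξ : E} {c T r α : ℝ} {f g : E → ℝ} {u v : ℝ → E → ℝ} {K : Set E}

lemma integrable_mul_comp_inner (hp : Continuous p) (ξ : E) (hf : Continuous f)
    (hfc : HasCompactSupport f) : Integrable fun x => f x * p ⟪ξ, x⟫ :=
  (hf.mul (hp.comp (innerSL ℝ ξ).continuous)).integrable_of_hasCompactSupport hfc.mul_right

lemma planeMoment_eq_integral_add (hp : ContDiff ℝ 1 p) (hf : Continuous f)
    (hfc : HasCompactSupport f) (hg : Continuous g) (hgc : HasCompactSupport g) :
    planeMoment p ξ c f g =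
      (∫ x, g x * p ⟪ξ, x⟫) + c * ∫ x, f x * deriv p ⟪ξ, x⟫ := by
  rw [planeMoment, integral_add (integrable_mul_comp_inner hp.continuous ξ hg hgc)
    ((integrable_mul_comp_inner (hp.continuous_deriv le_rfl) ξ hf hfc).const_mul c),
    integral_const_mul]

lemma planeMoment_add (hp : ContDiff ℝ 1 p) (hq : ContDiff ℝ 1 q) (hf : Continuous f)
    (hfc : HasCompactSupport f) (hg : Continuous g) (hgc : HasCompactSupport g) :
    planeMoment (p + q) ξ c f g = planeMoment p ξ c f g + planeMoment q ξ c f g := by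
  have hint {s : ℝ → ℝ} (hs : ContDiff ℝ 1 s) :
      Integrable fun x => g x * s ⟪ξ, x⟫ + c * (f x * deriv s ⟪ξ, x⟫) :=
    (integrable_mul_comp_inner hs.continuous ξ hg hgc).add
      ((integrable_mul_comp_inner (hs.continuous_deriv le_rfl) ξ hf hfc).const_mul c)
  rw [planeMoment, planeMoment, planeMoment, ← integral_add (hint hp) (hint hq)]
  refine integral_congr_ae (.of_forall fun x => ?_)
  simp only [Pi.add_apply, deriv_add (hp.differentiable one_ne_zero _)
    (hq.differentiable one_ne_zero _)]
  ring

lemma planeMoment_eq_zero (hp : ∀ x ∈ K, p =ᶠ[𝓝 ⟪ξ, x⟫] 0) (hf : ∀ x ∉ K, f x = 0)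
    (hg : ∀ x ∉ K, g x = 0) : planeMoment p ξ c f g = 0 := by
  refine integral_eq_zero_of_ae (.of_forall fun x => ?_)
  by_cases hx : x ∈ K
  · simp [(hp x hx).eq_of_nhds, (hp x hx).deriv_eq]
  · simp [hf x hx, hg x hx]

lemma planeMoment_eq_of_mul_deriv_eq_zero (h : ∀ x, f x * deriv p ⟪ξ, x⟫ = 0) (c c' : ℝ) :
    planeMoment p ξ c f g = planeMoment p ξ c' f g := by
  simp only [planeMoment, h, mul_zero]

namespace IsWave

lemma planeMoment_eq_initial (h : IsWave T u v) (hT : 0 < T) (hK : IsCompact K)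
    (huK : ∀ t ∈ Icc 0 T, ∀ x ∉ K, u t x = 0) (hp : ContDiff ℝ 2 p) (hc : c ^ 2 = ‖ξ‖ ^ 2)
    {t : ℝ} (ht : t ∈ Icc 0 T) :
    planeMoment (fun s => p (s - c * t)) ξ c (u t) (v t) = planeMoment p ξ c (u 0) (v 0) := by
  have hpair := h.integral_pairing_eq (isWave_plane hp hc T) hT hK huK ht
  simp only [planeMoment, deriv_comp_sub_const]
  convert hpair using 3 with x x
  · ring
  · simp only [mul_zero, sub_zero]
    ring

lemma planeMoment_initial_eq_zero_of_eventuallyEq (h : IsWave T u v) (hT : 0 < T)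
    (hu : ∀ t ∈ Icc 0 T, ∀ x ∉ closedBall 0 r, u t x = 0) (hp : ContDiff ℝ 2 p)
    (hc : c ^ 2 = ‖ξ‖ ^ 2) (hp0 : ∀ s ∈ closedBall (-(c * T)) (|c| * r), p =ᶠ[𝓝 s] 0) :
    planeMoment p ξ c (u 0) (v 0) = 0 := by
  have hTT : T ∈ Icc 0 T := right_mem_Icc.2 hT.le
  rw [← h.planeMoment_eq_initial hT (isCompact_closedBall 0 r) hu hp hc hTT]
  refine planeMoment_eq_zero (fun x hx => ?_) (hu T hTT)
    fun x hx => h.velocity_eq_zero hT (fun t ht => hu t ht x hx) hTT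
  have hs : ⟪ξ, x⟫ - c * T ∈ closedBall (-(c * T)) (|c| * r) := by
    simpa [Real.dist_eq] using inner_mem_closedBall hc hx
  exact (continuous_id.sub continuous_const).tendsto ⟪ξ, x⟫ |>.eventually (hp0 _ hs)

lemma planeMoment_initial_eq_zero (h : IsWave T u v) (hr : 0 ≤ r) (hα : 0 ≤ α) (hT : r + α < T)
    (hu : ∀ t ∈ Icc 0 T, ∀ x ∉ closedBall 0 r, u t x = 0)
    (hu0 : ∀ x ∉ closedBall 0 α, u 0 x = 0) (hp : ContDiff ℝ 2 p) (hc : c ^ 2 = ‖ξ‖ ^ 2)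
    (hc0 : c ≠ 0) : planeMoment p ξ c (u 0) (v 0) = 0 := by
  have hT0 : 0 < T := by linarith
  have h0 : (0 : ℝ) ∈ Icc 0 T := left_mem_Icc.2 hT0.le
  have hcT : |c| * r + |c| * α < ‖c * T‖ := by
    rw [norm_mul, Real.norm_eq_abs, Real.norm_of_nonneg hT0.le, ← mul_add]
    exact mul_lt_mul_of_pos_left hT (abs_pos.2 hc0)
  have hdisj := disjoint_closedBall_neg_union (mul_nonneg (abs_nonneg c) hα) hcT
  obtain ⟨q₁, q₂, hq₁, hq₂, rfl, hq₁0, hq₂0⟩ := exists_contDiff_add_eq_of_disjoint (k := 2) hp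
    isClosed_closedBall (isClosed_closedBall.union isClosed_closedBall) hdisj
  have huc : HasCompactSupport (u 0) := .intro (isCompact_closedBall 0 r) (hu 0 h0)
  have hvc : HasCompactSupport (v 0) := .intro (isCompact_closedBall 0 r)
    fun x hx => h.velocity_eq_zero hT0 (fun t ht => hu t ht x hx) h0
  rw [planeMoment_add (hq₁.of_le one_le_two) (hq₂.of_le one_le_two) (h.contDiff h0).continuous huc
      (h.continuous_velocity hT0 h0) hvc,
    h.planeMoment_initial_eq_zero_of_eventuallyEq hT0 hu hq₁ hc hq₁0, zero_add]
  have hu0q₂ (x : E) : u 0 x * deriv q₂ ⟪ξ, x⟫ = 0 := by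
    by_cases hx : x ∈ closedBall 0 α
    · simp [(hq₂0 _ (.inr (inner_mem_closedBall hc hx))).deriv_eq]
    · rw [hu0 x hx, zero_mul]
  rw [planeMoment_eq_of_mul_deriv_eq_zero hu0q₂ c (-c)]
  refine h.planeMoment_initial_eq_zero_of_eventuallyEq hT0 hu hq₂ (by rwa [neg_sq])
    fun s hs => hq₂0 s (.inl ?_)
  simpa only [neg_mul, neg_neg, abs_neg] using hs

lemma integral_mul_deriv_comp_inner_eq_zero (h : IsWave T u v) (hr : 0 ≤ r) (hα : 0 ≤ α)
    (hT : r + α < T) (hu : ∀ t ∈ Icc 0 T, ∀ x ∉ closedBall 0 r, u t x = 0)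
    (hu0 : ∀ x ∉ closedBall 0 α, u 0 x = 0) (hp : ContDiff ℝ 2 p) (hξ : ξ ≠ 0) {t : ℝ}
    (ht : t ∈ Icc 0 T) : ∫ x, u t x * deriv p ⟪ξ, x⟫ = 0 := by
  have hT0 : 0 < T := by linarith
  have huc : HasCompactSupport (u t) := .intro (isCompact_closedBall 0 r) (hu t ht)
  have hvc : HasCompactSupport (v t) := .intro (isCompact_closedBall 0 r)
    fun x hx => h.velocity_eq_zero hT0 (fun τ hτ => hu τ hτ x hx) ht
  have hmoment {c : ℝ} (hc : c ^ 2 = ‖ξ‖ ^ 2) :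
      (∫ x, v t x * p ⟪ξ, x⟫) + c * ∫ x, u t x * deriv p ⟪ξ, x⟫ = 0 := by
    have hc0 : c ≠ 0 := by
      rintro rfl
      exact hξ (by simpa using hc.symm)
    have hshift : ContDiff ℝ 2 fun s => p (s + c * t) := hp.comp (contDiff_id.add contDiff_const)
    have hconst := h.planeMoment_eq_initial hT0 (isCompact_closedBall 0 r) hu hshift hc ht
    simp only [sub_add_cancel] at hconst
    rw [← planeMoment_eq_integral_add (hp.of_le one_le_two) (h.contDiff ht).continuous huc
        (h.continuous_velocity hT0 ht) hvc,
      hconst, h.planeMoment_initial_eq_zero hr hα hT hu hu0 hshift hc hc0]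
  have hright := hmoment (c := ‖ξ‖) rfl
  have hleft := hmoment (c := -‖ξ‖) (neg_sq _)
  exact (mul_eq_zero.1 (by linarith : ‖ξ‖ * ∫ x, u t x * deriv p ⟪ξ, x⟫ = 0)).resolve_left
    (norm_ne_zero_iff.2 hξ)

end IsWave

end Moments

lemma IsWave.eq_zero [Nontrivial E] {T r α : ℝ} {u v : ℝ → E → ℝ} (h : IsWave T u v)
    (hr : 0 ≤ r) (hα : 0 ≤ α) (hT : r + α < T) (hu : ∀ t ∈ Icc 0 T, ∀ x ∉ closedBall 0 r, u t x = 0)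
    (hu0 : ∀ x ∉ closedBall 0 α, u 0 x = 0) {t : ℝ} (ht : t ∈ Icc 0 T) : u t = 0 := by
  borelize E
  have huc : HasCompactSupport (u t) := .intro (isCompact_closedBall 0 r) (hu t ht)
  have hcont : Continuous (u t) := (h.contDiff ht).continuous
  refine eq_zero_of_integral_mul_cos_sin_eq_zero hcont
    (hcont.integrable_of_hasCompactSupport huc) (fun ξ hξ => ?_) fun ξ hξ => ?_
  · simpa only [Real.deriv_sin] using
      h.integral_mul_deriv_comp_inner_eq_zero hr hα hT hu hu0 Real.contDiff_sin hξ ht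
  · simpa only [Real.deriv_cos', mul_neg, integral_neg, neg_eq_zero] using
      h.integral_mul_deriv_comp_inner_eq_zero hr hα hT hu hu0 Real.contDiff_cos hξ ht

end Waves

section UniqueContinuation

variable {E : Type*} [NormedAddCommGroup E] [InnerProductSpace ℝ E] [FiniteDimensional ℝ E]
  {T r α : ℝ} {Ω : Set E} {u : ℝ → E → ℝ}

lemma isWave_of_deriv_deriv_eq_laplacian (hT : 0 < T)
    (hu : ContDiffOn ℝ 2 (uncurry u) (Icc 0 T ×ˢ univ))
    (hwave : ∀ t ∈ Ioo 0 T, ∀ x, deriv (fun s => deriv (fun τ => u τ x) s) t = Δ (u t) x) :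
    IsWave T u fun t x => derivWithin (fun τ => u τ x) (Icc 0 T) t := by
  refine ⟨hu, fun t ht x => ?_, fun t ht x => ?_⟩
  · exact (differentiableOn_of_differentiableOn_uncurry (hu.differentiableOn two_ne_zero)
      (mem_univ x) t ht).hasDerivWithinAt
  · have hu' : ContDiffOn ℝ (1 + 1) (uncurry u) (Icc 0 T ×ˢ univ) := by
      simpa only [one_add_one_eq_two] using hu
    have hv := contDiffOn_uncurry_derivWithin (uniqueDiffOn_Icc hT) uniqueDiffOn_univ hu'
    have hderiv : (fun s => derivWithin (fun τ => u τ x) (Icc 0 T) s) =ᶠ[𝓝 t]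
        fun s => deriv (fun τ => u τ x) s := by
      filter_upwards [Ioo_mem_nhds ht.1 ht.2] with s hs
      exact derivWithin_of_mem_nhds (Icc_mem_nhds hs.1 hs.2)
    rw [← hwave t ht x, ← hderiv.deriv_eq]
    exact ((differentiableOn_of_differentiableOn_uncurry (hv.differentiableOn one_ne_zero)
      (mem_univ x)).differentiableAt (Icc_mem_nhds ht.1 ht.2)).hasDerivAt

lemma isWave_indicator {K : Set E} (hT : 0 < T) (hΩ : IsOpen Ω) (hK : IsClosed K) (hKΩ : K ⊆ Ω)
    (hreg : ContDiffOn ℝ 2 (uncurry u) (Icc 0 T ×ˢ Ω))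
    (hwave : ∀ t ∈ Ioo 0 T, ∀ x ∈ Ω,
      deriv (fun s => deriv (fun τ => u τ x) s) t = Δ (u t) x)
    (h0 : ∀ t ∈ Icc 0 T, ∀ x ∈ Ω, x ∉ K → u t x = 0) :
    IsWave T (fun t => Ω.indicator (u t))
      fun t x => derivWithin (fun τ => Ω.indicator (u τ) x) (Icc 0 T) t := by
  refine isWave_of_deriv_deriv_eq_laplacian hT ?_ fun t ht x => ?_
  · have hext := contDiffOn_indicator_of_eq_zero (k := 2) (f := uncurry u)
      (S := Icc 0 T ×ˢ univ) (isOpen_univ.prod hΩ) (isClosed_univ.prod hK)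
      (prod_mono_right hKΩ) (by simpa only [prod_inter_prod, inter_univ, univ_inter] using hreg)
      fun z hz => h0 z.1 hz.1.1 z.2 hz.2.1.2 fun hzK => hz.2.2 ⟨mem_univ _, hzK⟩
    refine hext.congr fun z _ => ?_
    by_cases hz : z.2 ∈ Ω <;> simp [uncurry, hz, indicator]
  · by_cases hx : x ∈ Ω
    · have hu_near : Ω.indicator (u t) =ᶠ[𝓝 x] u t :=
        eventuallyEq_of_mem (hΩ.mem_nhds hx) eqOn_indicator
      simp only [indicator_of_mem hx, hwave t ht x hx,
        (InnerProductSpace.laplacian_congr_nhds hu_near).eq_of_nhds]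
    · have hxK : x ∉ K := fun hxK => hx (hKΩ hxK)
      have hu_near : Ω.indicator (u t) =ᶠ[𝓝 x] fun _ => 0 := by
        filter_upwards [hK.isOpen_compl.mem_nhds hxK] with y hy
        by_cases hyΩ : y ∈ Ω
        · rw [indicator_of_mem hyΩ, h0 t (Ioo_subset_Icc_self ht) y hyΩ hy]
        · exact indicator_of_notMem hyΩ _
      simp [indicator_of_notMem hx,
        (InnerProductSpace.laplacian_congr_nhds hu_near).eq_of_nhds]

theorem unique_continuation_ball_localized_general [Nontrivial E] (hα : 0 ≤ α) (hαr : α ≤ r)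
    (hT : r + α < T) (hΩ : IsOpen Ω) (hrΩ : closedBall 0 r ⊆ Ω)
    (hreg : ContDiffOn ℝ 2 (uncurry u) (Icc 0 T ×ˢ Ω))
    (hwave : ∀ t ∈ Ioo 0 T, ∀ x ∈ Ω,
      deriv (fun s => deriv (fun τ => u τ x) s) t = Δ (u t) x)
    (hsupp : ∀ x ∈ Ω, α < ‖x‖ → u 0 x = 0)
    (hobs : ∀ t ∈ Ioo 0 T, ∀ x ∈ Ω, r < ‖x‖ → deriv (fun τ => u τ x) t = 0) :
    ∀ t ∈ Icc 0 T, ∀ x ∈ Ω, u t x = 0 := by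
  intro t ht x hx
  have hannulus (τ : ℝ) (hτ : τ ∈ Icc 0 T) (y : E) (hyΩ : y ∈ Ω) (hy : y ∉ closedBall 0 r) :
      u τ y = 0 := by
    have hry : r < ‖y‖ := by simpa using hy
    rw [eq_of_deriv_eq_zero (f := fun σ => u σ y) (differentiableOn_of_differentiableOn_uncurry
      (hreg.differentiableOn two_ne_zero) hyΩ) (fun σ hσ => hobs σ hσ y hyΩ hry) hτ]
    exact hsupp y hyΩ (hαr.trans_lt hry)
  have hext := isWave_indicator (by linarith) hΩ isClosed_closedBall hrΩ hreg hwave hannulus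
  have hzero : Ω.indicator (u t) = 0 := by
    refine hext.eq_zero (hα.trans hαr) hα hT (fun τ hτ y hy => ?_) (fun y hy => ?_) ht
    · exact indicator_apply_eq_zero.2 fun hyΩ => hannulus τ hτ y hyΩ hy
    · exact indicator_apply_eq_zero.2 fun hyΩ => hsupp y hyΩ (by simpa using hy)
  rw [← indicator_of_mem hx (u t), hzero, Pi.zero_apply]

end UniqueContinuation

lemma lap_eq_laplacian {n : ℕ} (f : EuclideanSpace ℝ (Fin n) → ℝ) (x : EuclideanSpace ℝ (Fin n)) :
    lap f x = Δ f x := by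
  simp only [lap, InnerProductSpace.laplacian_eq_iteratedFDeriv_orthonormalBasis f
    (EuclideanSpace.basisFun (Fin n) ℝ), EuclideanSpace.basisFun_apply]

theorem unique_continuation_ball_localized (n : ℕ) (hn : 1 ≤ n) (ε α T : ℝ)
    (hε0 : 0 < ε) (hε1 : ε < 1) (hα0 : 0 < α) (hα : α < 1 - ε) (hT : 1 + α - ε < T)
    (u : ℝ → EuclideanSpace ℝ (Fin n) → ℝ)
    -- u is of class C² on [0,T] × closure(Ω)
    (hreg : ContDiffOn ℝ 2 (Function.uncurry u)
      (Set.Icc 0 T ×ˢ Metric.closedBall (0 : EuclideanSpace ℝ (Fin n)) 1))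
    -- u solves the wave equation on [0,T] × closure(Ω)
    (hwave : ∀ t ∈ Set.Icc (0 : ℝ) T, ∀ x ∈ Metric.closedBall (0 : EuclideanSpace ℝ (Fin n)) 1,
      pdt (pdt u) t x = lap (u t) x)
    -- Dirichlet boundary conditions
    (hbdry : ∀ t ∈ Set.Icc (0 : ℝ) T, ∀ x : EuclideanSpace ℝ (Fin n), ‖x‖ = 1 → u t x = 0)
    -- initial data supported in the closed ball of radius α
    (hsupp : ∀ x : EuclideanSpace ℝ (Fin n), α ≤ ‖x‖ → ‖x‖ ≤ 1 → u 0 x = 0 ∧ pdt u 0 x = 0)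
    -- ∂ₜu vanishes on the observation set (0,T) × {1 − ε < |x| < 1}
    (hobs : ∀ t ∈ Set.Ioo (0 : ℝ) T, ∀ x : EuclideanSpace ℝ (Fin n),
      1 - ε < ‖x‖ → ‖x‖ < 1 → pdt u t x = 0) :
    ∀ t ∈ Set.Icc (0 : ℝ) T, ∀ x ∈ Metric.closedBall (0 : EuclideanSpace ℝ (Fin n)) 1,
      u t x = 0 := by
  have : Nonempty (Fin n) := Fin.pos_iff_nonempty.1 hn
  have hinterior := unique_continuation_ball_localized_general (Ω := ball 0 1) hα0.le hα.le
    (by linarith) isOpen_ball (closedBall_subset_ball (by linarith))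
    (hreg.mono (prod_mono_right ball_subset_closedBall))
    (fun t ht x hx => (hwave t (Ioo_subset_Icc_self ht) x (ball_subset_closedBall hx)).trans
      (lap_eq_laplacian (u t) x))
    (fun x hx hαx => (hsupp x hαx.le (mem_ball_zero_iff.1 hx).le).1)
    fun t ht x hx hεx => hobs t ht x hεx (mem_ball_zero_iff.1 hx)
  intro t ht x hx
  rcases (mem_closedBall_zero_iff.1 hx).lt_or_eq with hlt | heq
  · exact hinterior t ht x (mem_ball_zero_iff.2 hlt)
  · exact hbdry t ht x heq
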